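/- arXiv:1910.11025 — 4 statements merged into one kernel-verified Lean document; each statement's English description precedes it below -/
import Mathlib

section
/- Let X be a linearly orderable set (i.e., there exists a linear order on X) and let n be a positive natural number. If X is R^n-finite, then X is R^(n+1)-finite. -/
/-! Fix a linear order on `X` and a colouring `c` witnessing `R^n`-finiteness, and colour an
`(n+1)`-set by the `c`-colour of the `n`-set left after deleting its minimum. Let `Y` be infinite
and homogeneous for the new colouring, and let `Z` be the set of non-minimal elements of `Y`.
At most one element was dropped, so `Z` is infinite. Every `n`-subset of `Z` arises from an
`(n+1)`-subset of `Y` by deleting its minimum, so `Z` is homogeneous for `c`, a contradiction.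
Ramsey's theorem is not needed. -/

/-- A set (type) `X` is `R^n`-finite if there exists a 2-colouring of the
`n`-element subsets of `X` such that for every infinite subset `Y ⊆ X`,
the restriction of the colouring to the `n`-element subsets of `Y` is not constant. -/
def RFinite (X : Type*) (n : ℕ) : Prop :=
  ∃ c : Finset X → Bool, ∀ Y : Set X, Y.Infinite →
    ¬ ∃ i : Bool, ∀ s : Finset X, s.card = n → ↑s ⊆ Y → c s = i

/-- If `X` is linearly orderable and `R^n`-finite (for positive `n`),
then `X` is `R^(n+1)`-finite. -/
theorem stmt0 {X : Type*} (hlin : Nonempty (LinearOrder X)) (n : ℕ) (hn : 0 < n)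
    (h : RFinite X n) : RFinite X (n + 1) := by
  classical
  obtain ⟨_⟩ := hlin
  obtain ⟨c, hc⟩ := h
  refine ⟨fun s => if hs : s.Nonempty then c (s.erase (s.min' hs)) else true, ?_⟩
  rintro Y hY ⟨i, hi⟩
  have hsub : (Y \ {y ∈ Y | ∃ m ∈ Y, m < y}).Subsingleton := by
    rintro a ⟨haY, ha⟩ b ⟨hbY, hb⟩
    rcases lt_trichotomy a b with hab | hab | hab
    · exact absurd ⟨hbY, a, haY, hab⟩ hb
    · exact hab
    · exact absurd ⟨haY, b, hbY, hab⟩ ha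
  have hZ : {y ∈ Y | ∃ m ∈ Y, m < y}.Infinite := fun hfin =>
    hY ((hfin.union hsub.finite).subset fun y hy => by
      by_cases h' : y ∈ {y ∈ Y | ∃ m ∈ Y, m < y}
      · exact Or.inl h'
      · exact Or.inr ⟨hy, h'⟩)
  refine hc _ hZ ⟨i, fun s hcard hs => ?_⟩
  have hne : s.Nonempty := Finset.card_pos.mp (hcard ▸ hn)
  obtain ⟨-, m, hmY, hm⟩ := hs (s.min'_mem hne)
  have hlt : ∀ x ∈ s, m < x := fun x hx => hm.trans_le (s.min'_le x hx)
  have hms : m ∉ s := fun hx => lt_irrefl m (hlt m hx)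
  have hmin : (insert m s).min' (Finset.insert_nonempty m s) = m := by
    refine le_antisymm (Finset.min'_le _ _ (Finset.mem_insert_self m s)) ?_
    refine Finset.le_min' _ _ _ fun x hx => ?_
    rcases Finset.mem_insert.mp hx with rfl | hx
    · exact le_rfl
    · exact (hlt x hx).le
  have key := hi (insert m s) (by rw [Finset.card_insert_of_notMem hms, hcard]) (by
    intro x hx
    rcases Finset.mem_insert.mp (Finset.mem_coe.mp hx) with rfl | hx
    · exact hmY
    · exact (hs hx).1)
  simp only [Finset.insert_nonempty, dite_true, hmin, Finset.erase_insert hms] at key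
  exact key
end

section
/- Let n ≥ 2 be a natural number and let X be an R^n-infinite set. If 𝓕 is any infinite partition of X into finite pieces, then there exists an infinite subfamily 𝓕' ⊆ 𝓕 that admits a choice function (equivalently, an infinite set Y ⊆ X with |Y ∩ F| = 1 for every F ∈ 𝓕'). -/
/-!
The proof uses the Ramsey hypothesis, so that the only choices it makes are finitely many at a
time; it is therefore also an argument in set theory without the axiom of choice, where the result
has its content. (In Lean, classical choice would directly give a choice function on all of `𝓕`.)

Colour an `n`-element set by whether two of its points share a piece of `𝓕`, and let `Y` be an
infinite homogeneous set. As the pieces are finite, `Y` meets infinitely many of them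
(`infinite_pieces_meeting`), and one point of `Y` from each of `n` such pieces gives an `n`-element
subset of `Y` no two points of which share a piece. So no `n`-element subset of `Y` has two points
in one piece. As `n ≥ 2`, any two points of `Y` lie in an `n`-element subset of `Y`, hence `Y`
meets each piece at most once (`exists_infinite_partial_transversal`), and the pieces that meet `Y`
have a definable choice function: the unique point in `Y`.
-/

/-- A set (type) `X` is `R^n`-infinite if for every 2-colouring of the
`n`-element subsets of `X` there exists an infinite subset `Y ⊆ X` on whose
`n`-element subsets the colouring is constant. -/
def RInfinite (X : Type*) (n : ℕ) : Prop :=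
  ∀ c : Finset X → Bool, ∃ Y : Set X, Y.Infinite ∧
    ∃ i : Bool, ∀ s : Finset X, s.card = n → ↑s ⊆ Y → c s = i

/-- An infinite set meets infinitely many members of a cover by finite sets. -/
lemma infinite_pieces_meeting {X : Type*} {𝓕 : Set (Set X)} (hfin : ∀ A ∈ 𝓕, A.Finite)
    (hcov : ⋃₀ 𝓕 = Set.univ) {Y : Set X} (hY : Y.Infinite) :
    {A ∈ 𝓕 | (A ∩ Y).Nonempty}.Infinite := by
  intro hF
  refine hY ((hF.sUnion fun A hA => hfin A hA.1).subset fun y hy => ?_)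
  obtain ⟨A, hA, hyA⟩ : y ∈ ⋃₀ 𝓕 := hcov ▸ Set.mem_univ y
  exact ⟨A, ⟨hA, y, hyA, hy⟩, hyA⟩

/-- If `Y` meets infinitely many pieces, it contains `n` points from `n` distinct pieces. -/
lemma exists_scattered_finset {X : Type*} {𝓕 : Set (Set X)}
    (hdisj : ∀ A ∈ 𝓕, ∀ B ∈ 𝓕, A ≠ B → Disjoint A B) {Y : Set X}
    (hY : {A ∈ 𝓕 | (A ∩ Y).Nonempty}.Infinite) (n : ℕ) :
    ∃ s : Finset X, s.card = n ∧ ↑s ⊆ Y ∧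
      ∀ A ∈ 𝓕, ∀ x ∈ s, ∀ y ∈ s, x ∈ A → y ∈ A → x = y := by
  classical
  have eq_of_mem : ∀ A ∈ 𝓕, ∀ B ∈ 𝓕, ∀ x, x ∈ A → x ∈ B → A = B := by
    intro A hA B hB x hxA hxB
    by_contra hAB
    exact Set.disjoint_left.1 (hdisj A hA B hB hAB) hxA hxB
  obtain ⟨T, hT, hcard⟩ := hY.exists_subset_card_eq n
  -- A choice from the finitely many members of `T` only.
  choose g hg using fun A : T => (hT A.2).2
  have hginj : Function.Injective g := by
    intro A B hAB
    exact Subtype.ext (eq_of_mem A (hT A.2).1 B (hT B.2).1 (g A) (hg A).1 (hAB ▸ (hg B).1))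
  refine ⟨T.attach.image g, ?_, ?_, ?_⟩
  · rw [Finset.card_image_of_injective _ hginj, Finset.card_attach, hcard]
  · intro x hx
    obtain ⟨A, -, rfl⟩ := Finset.mem_image.1 (Finset.mem_coe.1 hx)
    exact (hg A).2
  · intro C hC x hx y hy hxC hyC
    obtain ⟨A, -, rfl⟩ := Finset.mem_image.1 hx
    obtain ⟨B, -, rfl⟩ := Finset.mem_image.1 hy
    have hA := eq_of_mem A (hT A.2).1 C hC _ (hg A).1 hxC
    have hB := eq_of_mem B (hT B.2).1 C hC _ (hg B).1 hyC
    rw [Subtype.ext (hA.trans hB.symm)]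

/-- The Ramsey step: some infinite set meets every piece in at most one point. -/
lemma exists_infinite_partial_transversal {X : Type*} {n : ℕ} (hn : 2 ≤ n) (h : RInfinite X n)
    {𝓕 : Set (Set X)} (hfin : ∀ A ∈ 𝓕, A.Finite)
    (hdisj : ∀ A ∈ 𝓕, ∀ B ∈ 𝓕, A ≠ B → Disjoint A B) (hcov : ⋃₀ 𝓕 = Set.univ) :
    ∃ Y : Set X, Y.Infinite ∧ ∀ A ∈ 𝓕, (A ∩ Y).Subsingleton := by
  classical
  obtain ⟨Y, hY, i, hi⟩ := h fun s =>
    decide (∃ A ∈ 𝓕, ∃ x ∈ s, ∃ y ∈ s, x ∈ A ∧ y ∈ A ∧ x ≠ y)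
  refine ⟨Y, hY, ?_⟩
  obtain ⟨s, hcard, hsY, hs⟩ :=
    exists_scattered_finset hdisj (infinite_pieces_meeting hfin hcov hY) n
  have hfalse : i = false := by
    rw [← hi s hcard hsY, decide_eq_false_iff_not]
    rintro ⟨A, hA, x, hx, y, hy, hxA, hyA, hxy⟩
    exact hxy (hs A hA x hx y hy hxA hyA)
  subst hfalse
  rintro A hA x ⟨hxA, hxY⟩ y ⟨hyA, hyY⟩
  by_contra hxy
  have hpair : (({x, y} : Finset X) : Set X) ⊆ Y := by
    simp [Set.insert_subset_iff, hxY, hyY]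
  obtain ⟨t, ht, htY, htcard⟩ := hY.exists_superset_ncard_eq hpair (Finset.finite_toSet _)
    (k := n) (by rw [Set.ncard_coe_finset, Finset.card_pair hxy]; exact hn)
  have htfin : t.Finite := Set.finite_of_ncard_pos (by omega)
  have hcol := hi htfin.toFinset (by rw [← Set.ncard_eq_toFinset_card t htfin, htcard])
    (by simpa using htY)
  rw [decide_eq_false_iff_not] at hcol
  exact hcol ⟨A, hA, x, htfin.mem_toFinset.2 (ht (by simp)), y,
    htfin.mem_toFinset.2 (ht (by simp)), hxA, hyA, hxy⟩

/-- If `n ≥ 2` and `X` is `R^n`-infinite, then every infinite partition of `X`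
into (nonempty) finite pieces has an infinite subfamily admitting a choice function. -/
theorem stmt1 {X : Type*} (n : ℕ) (hn : 2 ≤ n) (h : RInfinite X n)
    (𝓕 : Set (Set X)) (hinf : 𝓕.Infinite)
    (hne : ∀ A ∈ 𝓕, A.Nonempty) (hfin : ∀ A ∈ 𝓕, A.Finite)
    (hdisj : ∀ A ∈ 𝓕, ∀ B ∈ 𝓕, A ≠ B → Disjoint A B)
    (hcov : ⋃₀ 𝓕 = Set.univ) :
    ∃ 𝓕' ⊆ 𝓕, 𝓕'.Infinite ∧ ∃ f : Set X → X, ∀ A ∈ 𝓕', f A ∈ A := by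
  classical
  obtain ⟨Y, hY, hsub⟩ := exists_infinite_partial_transversal hn h hfin hdisj hcov
  refine ⟨{A ∈ 𝓕 | (A ∩ Y).Nonempty}, fun A hA => hA.1,
    infinite_pieces_meeting hfin hcov hY, ?_⟩
  have huniq : ∀ A ∈ {A ∈ 𝓕 | (A ∩ Y).Nonempty}, ∃! x, x ∈ A ∩ Y :=
    fun A hA => hA.2.elim fun x hx => ⟨x, hx, fun y hy => hsub A hA.1 hy hx⟩
  -- Outside the subfamily the value of `f` is irrelevant: any fixed point of `Y` serves.
  obtain ⟨y₀, -⟩ := hY.nonempty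
  refine ⟨fun A => if hA : ∃! x, x ∈ A ∩ Y then hA.exists.choose else y₀, fun A hA => ?_⟩
  simp only [dif_pos (huniq A hA)]
  exact (huniq A hA).exists.choose_spec.1
end

section
/- Let X be an infinite set, n ∈ ℕ with n ≥ 1, and c : [X]^n → {0,1} a colouring. Suppose that every infinite subset of X is R^(n−1)-infinite, and that there exists an infinite Y ⊆ X such that the restriction of c to [Y]^n (regarded as a colouring of the n-element subsets of Y) fails to be dense. Then there exists an infinite Z ⊆ X such that [Z]^n is monochromatic for c. -/
/-!
Call an `(n-1)`-subset `s` *split* if it extends by points of `Y` to sets of both colours.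
`R^(n-1)`-infinity of `Y` gives an infinite `A ⊆ Y` whose `(n-1)`-subsets are either all split or
all non-split; the former would make `c` dense on `Y`, so none is split. The common colour of the
extensions of `s` is then a 2-colouring of the `(n-1)`-subsets of `A`, and an infinite `Z ⊆ A`
homogeneous for it is homogeneous for `c`, because every `n`-subset of `Z` extends an
`(n-1)`-subset of `Z` by a point of `Y`.
-/

/-- A subset `A` of the ambient type `X` is `R^n`-infinite if for every 2-colouring
of the `n`-element subsets (of `X`, hence in particular of `A`) there is an infinite
`Y ⊆ A` on whose `n`-element subsets the colouring is constant. -/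
def RInfiniteOn {X : Type*} (A : Set X) (n : ℕ) : Prop :=
  ∀ c : Finset X → Bool, ∃ Y ⊆ A, Y.Infinite ∧
    ∃ i : Bool, ∀ s : Finset X, s.card = n → ↑s ⊆ Y → c s = i

/-- The colouring `c` of the `n`-element subsets of `W` is dense if there is an
infinite `Y ⊆ W` such that every `(n-1)`-element subset `s` of `Y` can be extended,
by points `y, z ∈ W \ s`, to `n`-element sets of different colours. -/
def DenseColouringOn {X : Type*} [DecidableEq X] (n : ℕ) (W : Set X)
    (c : Finset X → Bool) : Prop :=
  ∃ Y ⊆ W, Y.Infinite ∧ ∀ s : Finset X, s.card = n - 1 → ↑s ⊆ Y →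
    ∃ y ∈ W, ∃ z ∈ W, y ∉ s ∧ z ∉ s ∧ c (insert y s) ≠ c (insert z s)

/-- If `X` is infinite, every infinite subset of `X` is `R^(n-1)`-infinite, and there
is an infinite `Y ⊆ X` such that the restriction of `c` to the `n`-element subsets of
`Y` fails to be dense, then there is an infinite `Z ⊆ X` whose `n`-element subsets are
monochromatic for `c`. -/
theorem stmt4 {X : Type*} [DecidableEq X] (hX : Infinite X) (n : ℕ) (hn : 1 ≤ n)
    (c : Finset X → Bool)
    (hR : ∀ A : Set X, A.Infinite → RInfiniteOn A (n - 1))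
    (Y : Set X) (hY : Y.Infinite) (hnd : ¬ DenseColouringOn n Y c) :
    ∃ Z : Set X, Z.Infinite ∧
      ∃ i : Bool, ∀ s : Finset X, s.card = n → ↑s ⊆ Z → c s = i := by
  classical
  obtain ⟨A, hAY, hA, i, hi⟩ := hR Y hY fun s =>
    decide (∃ y ∈ Y, ∃ z ∈ Y, y ∉ s ∧ z ∉ s ∧ c (insert y s) ≠ c (insert z s))
  cases i with
  | true => exact absurd ⟨A, hAY, hA, fun s hs hsA => of_decide_eq_true (hi s hs hsA)⟩ hnd
  | false =>
    -- For a non-split `s`, this records the common colour of all extensions of `s` within `Y`.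
    obtain ⟨Z, hZA, hZ, j, hj⟩ := hR A hA fun s =>
      decide (∃ y ∈ Y, y ∉ s ∧ c (insert y s) = true)
    refine ⟨Z, hZ, j, fun s hs hsZ => ?_⟩
    obtain ⟨x, hx⟩ : s.Nonempty := Finset.card_pos.mp (by omega)
    have hcard : (s.erase x).card = n - 1 := by rw [Finset.card_erase_of_mem hx, hs]
    have hsub : (↑(s.erase x) : Set X) ⊆ Z := fun a ha => hsZ (Finset.mem_of_mem_erase ha)
    have hns := of_decide_eq_false (hi _ hcard (hsub.trans hZA))
    have hxY : x ∈ Y := hAY (hZA (hsZ hx))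
    have hxs : x ∉ s.erase x := Finset.notMem_erase x s
    rw [← hj _ hcard hsub]
    cases hc : c s with
    | true => exact (decide_eq_true ⟨x, hxY, hxs, by rwa [Finset.insert_erase hx]⟩).symm
    | false =>
      refine (decide_eq_false ?_).symm
      rintro ⟨y, hy, hys, hcy⟩
      exact hns ⟨x, hxY, y, hy, hxs, hys, by rw [Finset.insert_erase hx, hc, hcy]; decide⟩
end

section
/- Define F : ℕ × ℕ → ℕ recursively by F(n,0) = 4 and F(n,k+1) = 2^n·(R(F(n,k)) − 1) + 2, where R(m) is the least integer M such that every colouring of the 2-element subsets of an M-element set with 2 colours admits an m-element subset all of whose 2-element subsets get the same colour. Let X be a set, let c be the colouring assigning to each nonempty finite subset z of X the value ⌊log₂|z|⌋ mod 2, and let Y be a family of nonempty finite subsets of X such that FS_{≤4}(Y) consists of nonempty sets and is monochromatic for c. Then for every n ∈ ℕ there are fewer than F(n,n) elements y ∈ Y with |y| = n. -/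
/-!
The sets of `Y` of a fixed size `n` contain no sunflower with four petals. If `A, B, C, D` have a
common pairwise intersection `r` and all have size `n`, then with `p = n - |r|` the sets `A △ B` and
`A △ B △ C △ D` have `2p` and `4p` elements, so the integer parts of the logarithms of their sizes
differ by exactly one, against monochromaticity (`p ≠ 0` because `A △ B` is nonempty). By the
Erdős–Rado sunflower argument (`exists_sunflower`) there are therefore at most `(3n) ^ n` of them.

It remains to see `(3n) ^ n < F(n, n)`. Since `R(m) ≥ m`, the recursion gives
`F(n, k) > 3 · 2 ^ (n k)`, which is enough (`three_mul_pow_lt_Fdef`). As `R(m)` is an infimum of a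
set of naturals, with value `0` on the empty set, `R(m) ≥ m` relies on Ramsey's theorem for pairs
(`exists_homogeneous`).
-/

/-- `M` is large enough for the Ramsey property at `m`: every 2-colouring of the
2-element subsets of an `M`-element set has an `m`-element subset all of whose
2-element subsets get the same colour. -/
def RamseyProp (M m : ℕ) : Prop :=
  ∀ c : Finset (Fin M) → Bool, ∃ Z : Finset (Fin M), Z.card = m ∧
    ∃ i : Bool, ∀ s : Finset (Fin M), s ⊆ Z → s.card = 2 → c s = i

/-- The Ramsey number `R(m)`: the least `M` with the Ramsey property at `m`. -/
noncomputable def ramseyNumber (m : ℕ) : ℕ := sInf {M | RamseyProp M m}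

/-- The function `F` of the paper: `F(n,0) = 4` and
`F(n,k+1) = 2^n · (R(F(n,k)) − 1) + 2`. -/
noncomputable def Fdef (n : ℕ) : ℕ → ℕ
  | 0 => 4
  | k + 1 => 2 ^ n * (ramseyNumber (Fdef n k) - 1) + 2

instance {X : Type*} [DecidableEq X] :
    Std.Commutative (fun a b : Finset X => symmDiff a b) :=
  ⟨fun a b => symmDiff_comm a b⟩

instance {X : Type*} [DecidableEq X] :
    Std.Associative (fun a b : Finset X => symmDiff a b) :=
  ⟨fun a b c => symmDiff_assoc a b c⟩

/-- The symmetric difference of all the members of a finite family of finite sets. -/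
def FSfold {X : Type*} [DecidableEq X] (F : Finset (Finset X)) : Finset X :=
  F.fold (fun a b => symmDiff a b) ∅ id

/-- `FSle k Y` is the set of symmetric differences of between `1` and `k`
distinct elements of `Y`. -/
def FSle {X : Type*} [DecidableEq X] (k : ℕ) (Y : Set (Finset X)) : Set (Finset X) :=
  { z | ∃ F : Finset (Finset X), ↑F ⊆ Y ∧ 0 < F.card ∧ F.card ≤ k ∧ z = FSfold F }

/-- Ramsey's theorem for pairs in its asymmetric form, with the bound `2 ^ (a + b)`; the asymmetry
makes the induction on `a + b` work. -/
lemma exists_homogeneous {α : Type*} [DecidableEq α] (c : Finset α → Bool) :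
    ∀ (N a b : ℕ), a + b = N → ∀ S : Finset α, 2 ^ N ≤ S.card →
      ∃ Z ⊆ S, (Z.card = a ∧ ∀ x ∈ Z, ∀ y ∈ Z, x ≠ y → c {x, y} = true) ∨
        (Z.card = b ∧ ∀ x ∈ Z, ∀ y ∈ Z, x ≠ y → c {x, y} = false) := by
  intro N
  induction N with
  | zero =>
    intro a b hab S _
    exact ⟨∅, by simp, Or.inl ⟨by simp; omega, by simp⟩⟩
  | succ N ih =>
    intro a b hab S hS
    rcases Nat.eq_zero_or_pos a with ha | ha
    · exact ⟨∅, by simp, Or.inl ⟨by simp [ha], by simp⟩⟩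
    rcases Nat.eq_zero_or_pos b with hb | hb
    · exact ⟨∅, by simp, Or.inr ⟨by simp [hb], by simp⟩⟩
    obtain ⟨v, hv⟩ : S.Nonempty := by
      rw [← Finset.card_pos]
      exact lt_of_lt_of_le (by positivity) hS
    have hsplit := Finset.card_filter_add_card_filter_not (s := S.erase v)
      (fun x => c {v, x} = true)
    rw [Finset.card_erase_of_mem hv] at hsplit
    have hpow : 2 ^ (N + 1) = 2 * 2 ^ N := by ring
    by_cases hT : 2 ^ N ≤ ((S.erase v).filter (fun x => c {v, x} = true)).card
    · obtain ⟨Z, hZS, hZ⟩ := ih (a - 1) b (by omega) _ hT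
      have hZ' : ∀ x ∈ Z, x ≠ v ∧ x ∈ S ∧ c {v, x} = true := fun x hx => by
        have := hZS hx
        simp only [Finset.mem_filter, Finset.mem_erase] at this
        tauto
      have hvZ : v ∉ Z := fun h => (hZ' v h).1 rfl
      rcases hZ with ⟨hc, hZ⟩ | hZ
      · refine ⟨insert v Z, Finset.insert_subset hv fun x hx => (hZ' x hx).2.1, Or.inl ⟨?_, ?_⟩⟩
        · rw [Finset.card_insert_of_notMem hvZ]; omega
        · intro x hx y hy hxy
          rw [Finset.mem_insert] at hx hy
          rcases hx with rfl | hx <;> rcases hy with rfl | hy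
          · exact absurd rfl hxy
          · exact (hZ' y hy).2.2
          · rw [Finset.pair_comm]; exact (hZ' x hx).2.2
          · exact hZ x hx y hy hxy
      · exact ⟨Z, fun x hx => (hZ' x hx).2.1, Or.inr hZ⟩
    · have hT' : 2 ^ N ≤ ((S.erase v).filter (fun x => ¬ c {v, x} = true)).card := by omega
      obtain ⟨Z, hZS, hZ⟩ := ih a (b - 1) (by omega) _ hT'
      have hZ' : ∀ x ∈ Z, x ≠ v ∧ x ∈ S ∧ c {v, x} = false := fun x hx => by
        have := hZS hx
        simp only [Finset.mem_filter, Finset.mem_erase, Bool.not_eq_true] at this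
        tauto
      have hvZ : v ∉ Z := fun h => (hZ' v h).1 rfl
      rcases hZ with hZ | ⟨hc, hZ⟩
      · exact ⟨Z, fun x hx => (hZ' x hx).2.1, Or.inl hZ⟩
      · refine ⟨insert v Z, Finset.insert_subset hv fun x hx => (hZ' x hx).2.1, Or.inr ⟨?_, ?_⟩⟩
        · rw [Finset.card_insert_of_notMem hvZ]; omega
        · intro x hx y hy hxy
          rw [Finset.mem_insert] at hx hy
          rcases hx with rfl | hx <;> rcases hy with rfl | hy
          · exact absurd rfl hxy
          · exact (hZ' y hy).2.2
          · rw [Finset.pair_comm]; exact (hZ' x hx).2.2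
          · exact hZ x hx y hy hxy

lemma ramseyProp_two_pow (m : ℕ) : RamseyProp (2 ^ (m + m)) m := by
  intro c
  obtain ⟨Z, -, hZ⟩ := exists_homogeneous c (m + m) m m rfl Finset.univ (by simp)
  rcases hZ with ⟨hc, hZ⟩ | ⟨hc, hZ⟩
  · refine ⟨Z, hc, true, fun s hs h2 => ?_⟩
    obtain ⟨x, y, hxy, rfl⟩ := Finset.card_eq_two.1 h2
    exact hZ x (hs (by simp)) y (hs (by simp)) hxy
  · refine ⟨Z, hc, false, fun s hs h2 => ?_⟩
    obtain ⟨x, y, hxy, rfl⟩ := Finset.card_eq_two.1 h2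
    exact hZ x (hs (by simp)) y (hs (by simp)) hxy

lemma le_ramseyNumber (m : ℕ) : m ≤ ramseyNumber m := by
  have h : RamseyProp (ramseyNumber m) m :=
    Nat.sInf_mem (s := {M | RamseyProp M m}) ⟨_, ramseyProp_two_pow m⟩
  obtain ⟨Z, hc, -⟩ := h fun _ => true
  simpa [hc] using Finset.card_le_univ Z

lemma three_mul_pow_lt_Fdef (n k : ℕ) : 3 * (2 ^ n) ^ k < Fdef n k := by
  induction k with
  | zero => simp [Fdef]
  | succ k ih =>
    have h : 3 * (2 ^ n) ^ k ≤ ramseyNumber (Fdef n k) - 1 := by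
      have := le_ramseyNumber (Fdef n k)
      omega
    have h2 := Nat.mul_le_mul_left (2 ^ n) h
    rw [Fdef, pow_succ]
    calc 3 * ((2 ^ n) ^ k * 2 ^ n) = 2 ^ n * (3 * (2 ^ n) ^ k) := by ring
      _ < _ := by omega

lemma three_mul_self_pow_le (n : ℕ) : (3 * n) ^ n ≤ 3 * (2 ^ n) ^ n := by
  rcases lt_or_ge n 4 with h | h
  · interval_cases n <;> norm_num
  · have h3 : 3 * n ≤ 2 ^ n := by
      induction n, h using Nat.le_induction with
      | base => norm_num
      | succ n hn ih => rw [pow_succ]; omega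
    calc (3 * n) ^ n ≤ (2 ^ n) ^ n := Nat.pow_le_pow_left h3 n
      _ ≤ _ := by omega

/-- The sunflower lemma of Erdős and Rado for four petals. The bound is `(3n) ^ k`, for any `n ≥ k`,
in place of the usual `k! 3 ^ k`. -/
lemma exists_sunflower {X : Type*} [DecidableEq X] (n : ℕ) :
    ∀ k ≤ n, ∀ S : Finset (Finset X), (∀ A ∈ S, A.card = k) → (3 * n) ^ k < S.card →
      ∃ T ⊆ S, T.card = 4 ∧ ∃ r, ∀ A ∈ T, ∀ B ∈ T, A ≠ B → A ∩ B = r := by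
  intro k
  induction k with
  | zero =>
    intro _ S hS hcard
    have : S ⊆ {∅} := fun A hA => by simpa using hS A hA
    have := Finset.card_le_card this
    simp at this hcard
    omega
  | succ k ih =>
    intro hk S hS hcard
    -- A maximal subfamily of pairwise disjoint members; four of them would form a sunflower with
    -- empty kernel.
    obtain ⟨U, hU⟩ := Finset.exists_maximal
      (s := S.powerset.filter fun U => ∀ A ∈ U, ∀ B ∈ U, A ≠ B → A ∩ B = ∅)
      ⟨∅, by simp⟩
    have hU1 := hU.prop
    simp only [Finset.mem_filter, Finset.mem_powerset] at hU1
    obtain ⟨hUS, hUd⟩ := hU1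
    by_cases h4 : 4 ≤ U.card
    · obtain ⟨T, hTU, hT⟩ := Finset.exists_subset_card_eq h4
      exact ⟨T, hTU.trans hUS, hT, ∅, fun A hA B hB => hUd A (hTU hA) B (hTU hB)⟩
    have hW : (U.biUnion id).card ≤ 3 * n :=
      (Finset.card_biUnion_le_card_mul U id (k + 1) fun A hA => (hS A (hUS hA)).le).trans
        (Nat.mul_le_mul (by omega) hk)
    have hmeet : ∀ A ∈ S, ∃ x ∈ A, x ∈ U.biUnion id := by
      intro A hA
      by_contra! hcon
      have hdisj : ∀ B ∈ U, A ∩ B = ∅ := fun B hB => by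
        ext x
        have := hcon x
        simp only [Finset.mem_biUnion, id, not_exists, not_and] at this
        simp only [Finset.mem_inter, Finset.notMem_empty, iff_false, not_and]
        exact fun hx => this hx B hB
      have hAU : A ∈ U := by
        refine hU.le_of_ge (y := insert A U) ?_ (Finset.subset_insert _ _)
          (Finset.mem_insert_self _ _)
        simp only [Finset.mem_filter, Finset.mem_powerset]
        refine ⟨Finset.insert_subset hA hUS, fun B hB C hC hBC => ?_⟩
        rw [Finset.mem_insert] at hB hC
        rcases hB with rfl | hB <;> rcases hC with rfl | hC
        · exact absurd rfl hBC
        · exact hdisj C hC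
        · rw [Finset.inter_comm]; exact hdisj B hB
        · exact hUd B hB C hC hBC
      have h0 := hdisj A hAU
      have h1 := hS A hA
      rw [Finset.inter_self] at h0
      simp [h0] at h1
    obtain ⟨A₀, hA₀⟩ : S.Nonempty := Finset.card_pos.1 (by omega)
    have : Nonempty X := ⟨(hmeet A₀ hA₀).choose⟩
    choose! f hfA hfU using hmeet
    obtain ⟨x, -, hx⟩ := Finset.exists_lt_card_fiber_of_mul_lt_card_of_maps_to hfU
      (n := (3 * n) ^ k) (lt_of_le_of_lt
        (by rw [pow_succ, mul_comm]; exact Nat.mul_le_mul_left _ hW) hcard)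
    have hmem : ∀ A ∈ S.filter fun A => f A = x, A ∈ S ∧ x ∈ A := fun A hA => by
      rw [Finset.mem_filter] at hA
      exact ⟨hA.1, hA.2 ▸ hfA A hA.1⟩
    have hinj : Set.InjOn (fun A : Finset X => A.erase x) (S.filter fun A => f A = x) := by
      intro A hA B hB hAB
      rw [← Finset.insert_erase (hmem A hA).2, ← Finset.insert_erase (hmem B hB).2]
      exact congrArg (insert x) hAB
    obtain ⟨T, hTS, hT4, r, hr⟩ := ih (by omega)
      ((S.filter fun A => f A = x).image fun A => A.erase x)
      (by
        intro A hA
        obtain ⟨B, hB, rfl⟩ := Finset.mem_image.1 hA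
        rw [Finset.card_erase_of_mem (hmem B hB).2, hS B (hmem B hB).1]
        rfl)
      (by rwa [Finset.card_image_of_injOn hinj])
    have hTx : ∀ A ∈ T, x ∉ A ∧ insert x A ∈ S := fun A hA => by
      obtain ⟨B, hB, rfl⟩ := Finset.mem_image.1 (hTS hA)
      rw [Finset.insert_erase (hmem B hB).2]
      exact ⟨Finset.notMem_erase _ _, (hmem B hB).1⟩
    refine ⟨T.image (insert x), ?_, ?_, insert x r, ?_⟩
    · intro A hA
      obtain ⟨B, hB, rfl⟩ := Finset.mem_image.1 hA
      exact (hTx B hB).2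
    · rw [Finset.card_image_of_injOn, hT4]
      intro A hA B hB hAB
      rw [← Finset.erase_insert (hTx A hA).1, ← Finset.erase_insert (hTx B hB).1, hAB]
    · intro A hA B hB hAB
      obtain ⟨A', hA', rfl⟩ := Finset.mem_image.1 hA
      obtain ⟨B', hB', rfl⟩ := Finset.mem_image.1 hB
      rw [← Finset.insert_inter_distrib, hr A' hA' B' hB' (fun h => hAB (by rw [h]))]

lemma card_symmDiff_of_inter_eq {X : Type*} [DecidableEq X] {A B r : Finset X} {n : ℕ}
    (hA : A.card = n) (hB : B.card = n) (h : A ∩ B = r) :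
    (symmDiff A B).card = 2 * (n - r.card) := by
  have h1 : symmDiff A B = (A \ B) ∪ (B \ A) := rfl
  have hd : Disjoint (A \ B) (B \ A) := disjoint_sdiff_sdiff
  have h2 := Finset.card_sdiff_add_card_inter A B
  have h3 := Finset.card_sdiff_add_card_inter B A
  rw [Finset.inter_comm, h] at h3
  rw [h] at h2
  rw [h1, Finset.card_union_of_disjoint hd]
  omega

lemma disjoint_symmDiff_of_inter_eq {X : Type*} [DecidableEq X] {A B C D r : Finset X}
    (rAC : A ∩ C = r) (rAD : A ∩ D = r) (rBC : B ∩ C = r) (rBD : B ∩ D = r) :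
    Disjoint (symmDiff A B) (symmDiff C D) := by
  rw [Finset.disjoint_left]
  intro x
  simp only [Finset.ext_iff, Finset.mem_inter] at rAC rAD rBC rBD
  simp only [Finset.mem_symmDiff]
  grind

/-- If `Y` is a family of nonempty finite subsets of `X` such that `FS_{≤4}(Y)`
consists of nonempty sets and is monochromatic for the colouring
`z ↦ ⌊log₂ |z|⌋ mod 2`, then for every `n` there are fewer than `F(n,n)` many
elements of `Y` of cardinality `n`. -/
theorem stmt10 {X : Type*} [DecidableEq X] (Y : Set (Finset X))
    (hne : ∀ y ∈ Y, y.Nonempty)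
    (hfs : ∀ z ∈ FSle 4 Y, z.Nonempty)
    (hmono : ∃ i : ℕ, ∀ z ∈ FSle 4 Y, Nat.log 2 z.card % 2 = i) :
    ∀ n : ℕ, {y ∈ Y | y.card = n}.Finite ∧ {y ∈ Y | y.card = n}.ncard < Fdef n n := by
  intro n
  obtain ⟨i, hi⟩ := hmono
  have key : ∀ S : Finset (Finset X), ↑S ⊆ {y ∈ Y | y.card = n} → S.card ≤ (3 * n) ^ n := by
    intro S hS
    by_contra! hlt
    obtain ⟨T, hTS, hT, r, hr⟩ := exists_sunflower n n le_rfl S (fun A hA => (hS hA).2) hlt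
    obtain ⟨A, T', hAT, rfl, hT'⟩ := Finset.card_eq_succ.1 hT
    obtain ⟨B, C, D, hBC, hBD, hCD, rfl⟩ := Finset.card_eq_three.1 hT'
    simp only [Finset.mem_insert, Finset.mem_singleton, not_or] at hAT
    obtain ⟨hAB, hAC, hAD⟩ := hAT
    have hY : ∀ E ∈ ({A, B, C, D} : Finset (Finset X)), E ∈ Y ∧ E.card = n :=
      fun E hE => hS (hTS hE)
    have h2 : symmDiff A B ∈ FSle 4 Y := by
      refine ⟨{A, B}, fun E hE => (hY E ?_).1, by simp, ?_, ?_⟩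
      · simp only [Finset.coe_insert, Finset.coe_singleton, Set.mem_insert_iff,
          Set.mem_singleton_iff] at hE
        rcases hE with rfl | rfl <;> simp
      · exact Finset.card_le_two.trans (by norm_num)
      · rw [FSfold, Finset.fold_insert (by simpa using hAB), Finset.fold_singleton]
        simp only [id, ← Finset.bot_eq_empty, symmDiff_bot]
    have h4 : symmDiff (symmDiff A B) (symmDiff C D) ∈ FSle 4 Y := by
      refine ⟨{A, B, C, D}, fun E hE => (hY E hE).1, by simp, hT.le, ?_⟩
      rw [FSfold, Finset.fold_insert (by simp [hAB, hAC, hAD]),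
        Finset.fold_insert (by simp [hBC, hBD]), Finset.fold_insert (by simpa using hCD),
        Finset.fold_singleton]
      simp only [id, ← Finset.bot_eq_empty, symmDiff_bot, symmDiff_assoc]
    have rAB := hr A (by simp) B (by simp) hAB
    have rAC := hr A (by simp) C (by simp) hAC
    have rAD := hr A (by simp) D (by simp) hAD
    have rBC := hr B (by simp) C (by simp) hBC
    have rBD := hr B (by simp) D (by simp) hBD
    have rCD := hr C (by simp) D (by simp) hCD
    have cAB := card_symmDiff_of_inter_eq (hY A (by simp)).2 (hY B (by simp)).2 rAB
    have cCD := card_symmDiff_of_inter_eq (hY C (by simp)).2 (hY D (by simp)).2 rCD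
    have hdisj := disjoint_symmDiff_of_inter_eq rAC rAD rBC rBD
    have c4 : (symmDiff (symmDiff A B) (symmDiff C D)).card = (symmDiff A B).card * 2 := by
      rw [hdisj.symmDiff_eq_sup, Finset.sup_eq_union, Finset.card_union_of_disjoint hdisj,
        cAB, cCD]
      ring
    have e2 := hi _ h2
    have e4 := hi _ h4
    rw [c4, Nat.log_mul_base (by norm_num) (Finset.card_pos.2 (hfs _ h2)).ne'] at e4
    omega
  have hfin : {y ∈ Y | y.card = n}.Finite := by
    by_contra hinf
    obtain ⟨S, hS, hc⟩ := Set.Infinite.exists_subset_card_eq hinf ((3 * n) ^ n + 1)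
    have := key S hS
    omega
  refine ⟨hfin, ?_⟩
  have hk := key hfin.toFinset (by simp)
  rw [Set.ncard_eq_toFinset_card _ hfin]
  exact hk.trans_lt ((three_mul_self_pow_le n).trans_lt (three_mul_pow_lt_Fdef n n))
end
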